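/- arXiv:1706.08643 — 7 statements merged into one kernel-verified Lean document; each statement's English description precedes it below -/
import Mathlib

section
/- Let n ≥ 2, let a ∈ Bⁿ with a ≠ 0, let a* = a/|a|² and r = √(1−|a|²)/|a|, let σ be the inversion in the sphere S(a*, r), let U be a linear isometry (orthogonal map) of ℝⁿ, and set f = σ ∘ U. Then f maps Bⁿ \ {0} onto Bⁿ \ {a} with f(0) = a, and for all x, y ∈ Bⁿ \ {0}: ((1−|a|)/(1+|a|)) τ̃_{Bⁿ\{0}}(x,y) ≤ τ̃_{Bⁿ\{a}}(f(x), f(y)) ≤ ((1+|a|)/(1−|a|)) τ̃_{Bⁿ\{0}}(x,y). -/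
/-!
Write `t = ‖a‖` and `L = (1 + t) / (1 - t)`. Inversion `σ` in the sphere `S(a*, r)` satisfies
`|σu - σv| = r² |u - v| / (|u - a*| |v - a*|)`, so the quotient defining the Cassinian metric
transforms as
`|σu - σv| / √(|σu - σp| |σp - σv|)
  = |u - v| / √(|u - p| |p - v|) * (|p - a*| / √(|u - a*| |v - a*|))`.
Points of the closed unit ball lie at distance between `t⁻¹ - 1` and `t⁻¹ + 1` from `a*`, so the
last factor lies in `[L⁻¹, L]`. Since `r² = |a*|² - 1`, the sphere of inversion is orthogonal to the
unit sphere; hence `σ` preserves the unit ball and the unit sphere, and it swaps `0` and `a`.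
Therefore `f` maps the boundary `S ∪ {0}` of one domain onto the boundary `S ∪ {a}` of the other, and
the two suprema differ by a factor at most `L` either way. Bernoulli's inequality
`1 + L s ≤ (1 + s) ^ L` turns this into the bound for the logarithms.
-/

open Metric Set

/-- The scale invariant Cassinian metric
`τ̃_D(x,y) = log(1 + sup_{p ∈ ∂D} |x−y|/√(|x−p||p−y|))`. -/
noncomputable def scTau {n : ℕ} (D : Set (EuclideanSpace ℝ (Fin n)))
    (x y : EuclideanSpace ℝ (Fin n)) : ℝ :=
  Real.log (1 + sSup ((fun p => dist x y / Real.sqrt (dist x p * dist p y)) '' frontier D))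

open EuclideanGeometry

/-- Logarithmic form of Bernoulli's inequality. -/
lemma log_le_mul_log {L s s' : ℝ} (hL : 1 ≤ L) (hs : 0 ≤ s) (hs' : 0 ≤ s') (h : s' ≤ L * s) :
    Real.log (1 + s') ≤ L * Real.log (1 + s) := by
  rw [← Real.log_rpow (by linarith)]
  apply Real.log_le_log (by linarith)
  have := one_add_mul_self_le_rpow_one_add (by linarith : (-1 : ℝ) ≤ s) hL
  linarith

lemma frontier_punctured_ball {E : Type*} [NormedAddCommGroup E] [NormedSpace ℝ E] [Nontrivial E]
    {c : E} (hc : c ∈ ball (0 : E) 1) :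
    frontier (ball (0 : E) 1 \ {c}) = sphere 0 1 ∪ {c} := by
  have ho : IsOpen (ball (0 : E) 1 \ {c}) := isOpen_ball.sdiff isClosed_singleton
  have : (nhdsWithin c {c}ᶜ).NeBot := Module.punctured_nhds_neBot ℝ E c
  have hcl : closure (ball (0 : E) 1 \ {c}) = closedBall 0 1 := by
    rw [← closure_ball (0 : E) one_ne_zero, sdiff_eq]
    exact (closure_mono inter_subset_left).antisymm (closure_minimal
      ((dense_compl_singleton c).open_subset_closure_inter isOpen_ball) isClosed_closure)
  rw [frontier, hcl, ho.interior_eq]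
  ext x
  simp only [mem_ball, dist_zero_right] at hc
  simp only [mem_sdiff, mem_closedBall, mem_ball, mem_singleton_iff, mem_union, Metric.mem_sphere,
    dist_zero_right, not_and, not_not]
  constructor
  · rintro ⟨h1, h2⟩
    rcases h1.lt_or_eq with h | h
    · exact Or.inr (h2 h)
    · exact Or.inl h
  · rintro (h | rfl)
    · exact ⟨h.le, fun h' => absurd h h'.ne⟩
    · exact ⟨hc.le, fun _ => rfl⟩

/-- The supremum in `scTau` is over a bounded set when `x` and `y` lie in a bounded open domain. -/
lemma bddAbove_scTau {n : ℕ} {D : Set (EuclideanSpace ℝ (Fin n))} (hD : IsOpen D)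
    (hb : Bornology.IsBounded D) {x y : EuclideanSpace ℝ (Fin n)} (hx : x ∈ D) (hy : y ∈ D) :
    BddAbove ((fun p => dist x y / Real.sqrt (dist x p * dist p y)) '' frontier D) := by
  have hc : IsCompact (frontier D) :=
    hb.isCompact_closure.of_isClosed_subset isClosed_frontier frontier_subset_closure
  refine hc.bddAbove_image (ContinuousOn.div (by fun_prop) (by fun_prop) fun p hp => ?_)
  have hpD : p ∉ D := fun h => by
    rw [hD.frontier_eq] at hp
    exact hp.2 h
  have h1 : 0 < dist x p := dist_pos.2 (by rintro rfl; exact hpD hx)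
  have h2 : 0 < dist p y := dist_pos.2 (by rintro rfl; exact hpD hy)
  positivity

/-- If `g` maps the boundary of `D` onto that of `D'` and distorts the Cassinian quotients at
boundary points by a factor at most `L` in both directions, it distorts `scTau` by at most `L`. -/
lemma scTau_distortion {n : ℕ} {D D' : Set (EuclideanSpace ℝ (Fin n))}
    {x y x' y' : EuclideanSpace ℝ (Fin n)} {L : ℝ} (hL : 1 ≤ L)
    (hD : IsOpen D) (hb : Bornology.IsBounded D) (hx : x ∈ D) (hy : y ∈ D)
    (hD' : IsOpen D') (hb' : Bornology.IsBounded D') (hx' : x' ∈ D') (hy' : y' ∈ D')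
    (hne : (frontier D).Nonempty)
    (g : EuclideanSpace ℝ (Fin n) → EuclideanSpace ℝ (Fin n))
    (hg : g '' frontier D = frontier D')
    (h1 : ∀ p ∈ frontier D, dist x' y' / Real.sqrt (dist x' (g p) * dist (g p) y') ≤
      L * (dist x y / Real.sqrt (dist x p * dist p y)))
    (h2 : ∀ p ∈ frontier D, dist x y / Real.sqrt (dist x p * dist p y) ≤
      L * (dist x' y' / Real.sqrt (dist x' (g p) * dist (g p) y'))) :
    L⁻¹ * scTau D x y ≤ scTau D' x' y' ∧ scTau D' x' y' ≤ L * scTau D x y := by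
  have hB := bddAbove_scTau hD hb hx hy
  have hB' := bddAbove_scTau hD' hb' hx' hy'
  have hL0 : 0 < L := by linarith
  have hne' : (frontier D').Nonempty := hg ▸ hne.image g
  have hs : ∀ (E : Set (EuclideanSpace ℝ (Fin n))) (u v : EuclideanSpace ℝ (Fin n)),
      0 ≤ sSup ((fun p => dist u v / Real.sqrt (dist u p * dist p v)) '' frontier E) := by
    intro E u v
    apply Real.sSup_nonneg
    rintro _ ⟨p, -, rfl⟩
    positivity
  unfold scTau
  constructor
  · rw [inv_mul_le_iff₀ hL0]
    apply log_le_mul_log hL (hs _ _ _) (hs _ _ _)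
    apply csSup_le (hne.image _)
    rintro _ ⟨p, hp, rfl⟩
    refine (h2 p hp).trans (mul_le_mul_of_nonneg_left (le_csSup hB' ?_) hL0.le)
    exact ⟨g p, hg ▸ mem_image_of_mem g hp, rfl⟩
  · apply log_le_mul_log hL (hs _ _ _) (hs _ _ _)
    apply csSup_le (hne'.image _)
    rw [← hg]
    rintro _ ⟨_, ⟨p, hp, rfl⟩, rfl⟩
    exact (h1 p hp).trans (mul_le_mul_of_nonneg_left (le_csSup hB ⟨p, hp, rfl⟩) hL0.le)

/-- A sphere `S(c, r)` with `r² = |c|² - 1` is orthogonal to the unit sphere; its inversion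
multiplies `|x|² - 1` by a positive factor. -/
lemma norm_sq_inversion_sub_one {E : Type*} [NormedAddCommGroup E] [InnerProductSpace ℝ E]
    {c x : E} {r : ℝ} (hr : r ^ 2 = ‖c‖ ^ 2 - 1) (hx : x ≠ c) :
    ‖inversion c r x‖ ^ 2 - 1 = (r / dist x c) ^ 2 * (‖x‖ ^ 2 - 1) := by
  have hd : dist x c ≠ 0 := dist_ne_zero.2 hx
  have h1 : ‖x‖ ^ 2 = ‖x - c‖ ^ 2 + 2 * inner ℝ (x - c) c + ‖c‖ ^ 2 := by
    conv_lhs => rw [← sub_add_cancel x c]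
    exact norm_add_sq_real _ _
  rw [inversion, vsub_eq_sub, vadd_eq_add, norm_add_sq_real, norm_smul, inner_smul_left, h1]
  rw [dist_eq_norm] at *
  simp only [Real.norm_eq_abs, sq_abs, mul_pow, conj_trivial, div_pow, hr]
  field_simp
  ring

/-- How the Cassinian quotient transforms under inversion. -/
lemma cassinian_quotient_inversion {E : Type*} [NormedAddCommGroup E] [InnerProductSpace ℝ E]
    {c x y p : E} {r : ℝ} (hr : 0 < r) (hx : x ≠ c) (hy : y ≠ c) (hp : p ≠ c) :
    dist (inversion c r x) (inversion c r y) /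
        Real.sqrt (dist (inversion c r x) (inversion c r p) *
          dist (inversion c r p) (inversion c r y)) =
      dist x y / Real.sqrt (dist x p * dist p y) *
        (dist p c / Real.sqrt (dist x c * dist y c)) := by
  rw [dist_inversion_inversion hx hy, dist_inversion_inversion hx hp,
    dist_inversion_inversion hp hy]
  have hX : 0 < dist x c := dist_pos.2 hx
  have hY : 0 < dist y c := dist_pos.2 hy
  have hP : 0 < dist p c := dist_pos.2 hp
  have hXY : 0 < Real.sqrt (dist x c * dist y c) := by positivity
  have hsq : Real.sqrt (dist x c * dist y c) ^ 2 = dist x c * dist y c :=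
    Real.sq_sqrt (by positivity)
  have key : Real.sqrt (r ^ 2 / (dist x c * dist p c) * dist x p *
      (r ^ 2 / (dist p c * dist y c) * dist p y)) =
      r ^ 2 / (dist p c * Real.sqrt (dist x c * dist y c)) *
        Real.sqrt (dist x p * dist p y) := by
    rw [Real.sqrt_eq_iff_mul_self_eq (by positivity) (by positivity), ← pow_two, mul_pow, div_pow,
      mul_pow, hsq, Real.sq_sqrt (by positivity)]
    field_simp
  rw [key]
  -- If `p` is `x` or `y`, both sides are `0` because of division by zero.
  rcases eq_or_ne (Real.sqrt (dist x p * dist p y)) 0 with h | h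
  · simp [h]
  · field_simp
    rw [hsq]
    ring

/-- Distortion of the scale invariant Cassinian metric under Möbius maps of a punctured ball
onto another punctured ball: `f = σ ∘ U` maps `Bⁿ \ {0}` onto `Bⁿ \ {a}`, `f(0) = a`, and
`((1−|a|)/(1+|a|)) τ̃_{Bⁿ∖{0}}(x,y) ≤ τ̃_{Bⁿ∖{a}}(f x, f y) ≤ ((1+|a|)/(1−|a|)) τ̃_{Bⁿ∖{0}}(x,y)`. -/
theorem stmt_0 (n : ℕ) (hn : 2 ≤ n) (a : EuclideanSpace ℝ (Fin n))
    (ha : a ∈ ball (0 : EuclideanSpace ℝ (Fin n)) 1) (ha0 : a ≠ 0)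
    (astar : EuclideanSpace ℝ (Fin n)) (hastar : astar = (‖a‖ ^ 2)⁻¹ • a)
    (r : ℝ) (hr : r = Real.sqrt (1 - ‖a‖ ^ 2) / ‖a‖)
    (U : EuclideanSpace ℝ (Fin n) ≃ₗᵢ[ℝ] EuclideanSpace ℝ (Fin n))
    (f : EuclideanSpace ℝ (Fin n) → EuclideanSpace ℝ (Fin n))
    (hf : f = EuclideanGeometry.inversion astar r ∘ U) :
    f '' (ball 0 1 \ {0}) = ball 0 1 \ {a} ∧ f 0 = a ∧
    ∀ x ∈ ball (0 : EuclideanSpace ℝ (Fin n)) 1 \ {0},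
      ∀ y ∈ ball (0 : EuclideanSpace ℝ (Fin n)) 1 \ {0},
        (1 - ‖a‖) / (1 + ‖a‖) * scTau (ball 0 1 \ {0}) x y ≤
            scTau (ball 0 1 \ {a}) (f x) (f y) ∧
          scTau (ball 0 1 \ {a}) (f x) (f y) ≤
            (1 + ‖a‖) / (1 - ‖a‖) * scTau (ball 0 1 \ {0}) x y := by
  have ht1 : ‖a‖ < 1 := by simpa using ha
  have ht0 : 0 < ‖a‖ := norm_pos_iff.2 ha0
  have : Nontrivial (EuclideanSpace ℝ (Fin n)) := ⟨a, 0, ha0⟩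
  have hL : 1 ≤ (1 + ‖a‖) / (1 - ‖a‖) := by
    rw [le_div_iff₀ (by linarith)]
    linarith
  have hLinv : (1 - ‖a‖) / (1 + ‖a‖) = ((1 + ‖a‖) / (1 - ‖a‖))⁻¹ := (inv_div _ _).symm
  have hc : ‖astar‖ = ‖a‖⁻¹ := by
    rw [hastar, norm_smul, norm_inv, norm_pow, norm_norm]
    field_simp
  have hc1 : 1 < ‖astar‖ := by
    rw [hc]
    exact (one_lt_inv₀ ht0).2 ht1
  have h1t : 0 < 1 - ‖a‖ ^ 2 := by nlinarith
  have hr0 : 0 < r := by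
    rw [hr]
    positivity
  have hr2 : r ^ 2 = ‖astar‖ ^ 2 - 1 := by
    rw [hr, hc, div_pow, Real.sq_sqrt h1t.le]
    field_simp
  have hne : ∀ u : EuclideanSpace ℝ (Fin n), ‖u‖ ≤ 1 → u ≠ astar := by
    rintro u hu rfl
    linarith
  have hfac : ∀ u : EuclideanSpace ℝ (Fin n), ‖u‖ ≤ 1 → 0 < (r / dist u astar) ^ 2 := by
    intro u hu
    have := dist_pos.2 (hne u hu)
    positivity
  have hball : ∀ u, ‖u‖ < 1 → ‖inversion astar r u‖ < 1 := by
    intro u hu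
    have h := norm_sq_inversion_sub_one hr2 (hne u hu.le)
    have h2 := hfac u hu.le
    have h3 : ‖u‖ ^ 2 - 1 < 0 := by nlinarith [norm_nonneg u]
    have := mul_neg_of_pos_of_neg h2 h3
    nlinarith [norm_nonneg (inversion astar r u)]
  have hsphere : ∀ u, ‖u‖ = 1 → ‖inversion astar r u‖ = 1 := by
    intro u hu
    have h := norm_sq_inversion_sub_one hr2 (hne u hu.le)
    rw [hu] at h
    have h3 : ‖inversion astar r u‖ ^ 2 = 1 := by linarith
    exact (pow_eq_one_iff_of_nonneg (norm_nonneg _) two_ne_zero).1 h3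
  have hinv : ∀ u, inversion astar r (inversion astar r u) = u :=
    inversion_inversion astar hr0.ne'
  have h0a : inversion astar r 0 = a := by
    rw [inversion, dist_zero_left, vsub_eq_sub, vadd_eq_add, div_pow, hr2, hc, hastar, zero_sub,
      smul_neg, smul_smul, neg_add_eq_sub, ← sub_smul]
    have : (‖a‖ ^ 2)⁻¹ - (‖a‖⁻¹ ^ 2 - 1) / ‖a‖⁻¹ ^ 2 * (‖a‖ ^ 2)⁻¹ = 1 := by
      field_simp
      ring
    rw [this, one_smul]
  have ha0' : inversion astar r a = 0 := by rw [← h0a, hinv]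
  have hfx : ∀ u, f u = inversion astar r (U u) := fun u => by rw [hf]; rfl
  have hf0 : f 0 = a := by rw [hfx, map_zero, h0a]
  have hfg : ∀ v, f (U.symm (inversion astar r v)) = v := fun v => by
    rw [hfx, U.apply_symm_apply, hinv]
  have hinj : ∀ u, f u = a → u = 0 := fun u hu => by
    rw [hfx] at hu
    have := hinv (U u)
    rw [hu, ha0'] at this
    exact U.map_eq_zero_iff.1 this.symm
  have hmaps : ∀ x ∈ ball (0 : EuclideanSpace ℝ (Fin n)) 1 \ {0}, f x ∈ ball 0 1 \ {a} := by
    rintro x ⟨hx, hx0⟩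
    rw [mem_ball_zero_iff] at hx
    refine ⟨?_, fun h => hx0 (hinj x h)⟩
    rw [mem_ball_zero_iff, hfx]
    exact hball _ (by rwa [U.norm_map])
  refine ⟨?_, hf0, ?_⟩
  · apply Subset.antisymm
    · rintro _ ⟨x, hx, rfl⟩
      exact hmaps x hx
    · rintro v ⟨hv, hva⟩
      rw [mem_ball_zero_iff] at hv
      refine ⟨U.symm (inversion astar r v), ⟨?_, fun h => hva ?_⟩, hfg v⟩
      · rw [mem_ball_zero_iff, U.symm.norm_map]
        exact hball v hv
      · rw [mem_singleton_iff] at h ⊢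
        rw [← hfg v, h, hf0]
  intro x hx y hy
  have hF0 := frontier_punctured_ball (mem_ball_self one_pos : (0 : EuclideanSpace ℝ (Fin n)) ∈ _)
  have hFa := frontier_punctured_ball ha
  have hopen : ∀ c : EuclideanSpace ℝ (Fin n), IsOpen (ball 0 1 \ {c}) := fun c =>
    isOpen_ball.sdiff isClosed_singleton
  have hbdd : ∀ c : EuclideanSpace ℝ (Fin n), Bornology.IsBounded (ball 0 1 \ {c}) := fun c =>
    isBounded_ball.subset sdiff_subset
  have himage : f '' frontier (ball 0 1 \ {0}) = frontier (ball 0 1 \ {a}) := by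
    rw [hF0, hFa, image_union, image_singleton, hf0]
    congr 1
    apply Subset.antisymm
    · rintro _ ⟨p, hp, rfl⟩
      rw [mem_sphere_zero_iff_norm] at hp ⊢
      rw [hfx]
      exact hsphere _ (by rwa [U.norm_map])
    · intro v hv
      rw [mem_sphere_zero_iff_norm] at hv
      refine ⟨U.symm (inversion astar r v), ?_, hfg v⟩
      rw [mem_sphere_zero_iff_norm, U.symm.norm_map]
      exact hsphere v hv
  have hlow : ∀ u : EuclideanSpace ℝ (Fin n), ‖u‖ ≤ 1 → ‖a‖⁻¹ - 1 ≤ dist u astar := by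
    intro u hu
    have := norm_sub_norm_le astar u
    rw [← hc, dist_comm, dist_eq_norm]
    linarith
  have hupp : ∀ u : EuclideanSpace ℝ (Fin n), ‖u‖ ≤ 1 → dist u astar ≤ ‖a‖⁻¹ + 1 := by
    intro u hu
    have := norm_sub_le u astar
    rw [← hc, dist_eq_norm]
    linarith
  have hti : 0 < ‖a‖⁻¹ - 1 := by linarith
  have hLe : (1 + ‖a‖) / (1 - ‖a‖) = (‖a‖⁻¹ + 1) / (‖a‖⁻¹ - 1) := by
    have : 1 - ‖a‖ ≠ 0 := by linarith
    rw [div_eq_div_iff this hti.ne']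
    field_simp
  have hxn : ‖U x‖ ≤ 1 := by
    rw [U.norm_map]
    exact (mem_ball_zero_iff.1 hx.1).le
  have hyn : ‖U y‖ ≤ 1 := by
    rw [U.norm_map]
    exact (mem_ball_zero_iff.1 hy.1).le
  have hslow : ‖a‖⁻¹ - 1 ≤ Real.sqrt (dist (U x) astar * dist (U y) astar) := by
    apply Real.le_sqrt_of_sq_le
    rw [pow_two]
    exact mul_le_mul (hlow _ hxn) (hlow _ hyn) hti.le dist_nonneg
  have hsupp : Real.sqrt (dist (U x) astar * dist (U y) astar) ≤ ‖a‖⁻¹ + 1 := by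
    apply Real.sqrt_le_iff.2 ⟨by positivity, ?_⟩
    rw [pow_two]
    exact mul_le_mul (hupp _ hxn) (hupp _ hyn) dist_nonneg (by positivity)
  have hpn : ∀ p ∈ frontier (ball (0 : EuclideanSpace ℝ (Fin n)) 1 \ {0}), ‖U p‖ ≤ 1 := by
    intro p hp
    rw [U.norm_map]
    rw [hF0] at hp
    rcases hp with hp | hp
    · exact (mem_sphere_zero_iff_norm.1 hp).le
    · rw [mem_singleton_iff.1 hp, norm_zero]
      exact zero_le_one
  have hquot : ∀ p ∈ frontier (ball (0 : EuclideanSpace ℝ (Fin n)) 1 \ {0}),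
      dist (f x) (f y) / Real.sqrt (dist (f x) (f p) * dist (f p) (f y)) =
      dist x y / Real.sqrt (dist x p * dist p y) *
        (dist (U p) astar / Real.sqrt (dist (U x) astar * dist (U y) astar)) := by
    intro p hp
    have h := cassinian_quotient_inversion hr0 (hne _ hxn) (hne _ hyn) (hne _ (hpn p hp))
    simpa only [← hfx, U.dist_map] using h
  rw [hLinv]
  refine scTau_distortion hL (hopen 0) (hbdd 0) hx hy (hopen a) (hbdd a) (hmaps x hx) (hmaps y hy)
    ?_ f himage ?_ ?_
  · rw [hF0]
    exact ⟨0, Or.inr rfl⟩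
  · intro p hp
    rw [hquot p hp, mul_comm]
    apply mul_le_mul_of_nonneg_right _ (by positivity)
    rw [hLe]
    exact div_le_div₀ (by positivity) (hupp _ (hpn p hp)) hti hslow
  · intro p hp
    rw [hquot p hp, mul_left_comm]
    apply le_mul_of_one_le_right (by positivity)
    have hS := hti.trans_le hslow
    rw [hLe, div_mul_div_comm, one_le_div (by positivity), mul_comm]
    exact mul_le_mul hsupp (hlow _ (hpn p hp)) hti.le (by positivity)
end

section
/- Let x, y ∈ Bⁿ with y ≠ 0 and x = t y for some real t with 0 < t ≤ 1 (so x and y lie on a common radial segment and |x| ≤ |y|). Then τ̃_{Bⁿ}(x,y) = log(1 + |x−y|/√((1−|x|)(1−|y|))). -/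
/-!
For `p` on the unit sphere, the factors `|x - p|` and `|p - y|` are at least `1 - |x|` and
`1 - |y|`. Since `x` and `y` lie on one ray from the origin, `p = y / |y|` attains both bounds at
once (`dist_smul_radial`), so the supremum is a maximum, attained there.
-/

open Metric Set

/-- The distance from a point `s • y` of the line through `0` and `y` to the radial projection
`‖y‖⁻¹ • y` of `y` to the unit sphere. For `0 ≤ s` it is the distance from `s • y` to the sphere. -/
lemma dist_smul_radial {n : ℕ} (y : EuclideanSpace ℝ (Fin n)) (hy0 : y ≠ 0)
    (s : ℝ) (hs : s * ‖y‖ ≤ 1) :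
    dist (s • y) (‖y‖⁻¹ • y) = 1 - s * ‖y‖ := by
  have hpos : 0 < ‖y‖ := norm_pos_iff.mpr hy0
  have hle : s - ‖y‖⁻¹ ≤ 0 := by
    rw [sub_nonpos, ← one_div, le_div_iff₀ hpos]
    exact hs
  rw [dist_eq_norm, ← sub_smul, norm_smul, Real.norm_eq_abs, abs_of_nonpos hle]
  field_simp
  ring

/-- Formula for the scale invariant Cassinian metric of the unit ball at radially
aligned points on the same side of the origin (`x = t y`, `0 < t ≤ 1`):
`τ̃_{Bⁿ}(x,y) = log(1 + |x−y|/√((1−|x|)(1−|y|)))`. -/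
theorem stmt_3 (n : ℕ) (hn : 0 < n) (x y : EuclideanSpace ℝ (Fin n))
    (hx : x ∈ ball (0 : EuclideanSpace ℝ (Fin n)) 1)
    (hy : y ∈ ball (0 : EuclideanSpace ℝ (Fin n)) 1) (hy0 : y ≠ 0)
    (t : ℝ) (ht0 : 0 < t) (ht1 : t ≤ 1) (hxy : x = t • y) :
    scTau (ball 0 1) x y =
      Real.log (1 + dist x y / Real.sqrt ((1 - ‖x‖) * (1 - ‖y‖))) := by
  have hx1 : ‖x‖ < 1 := mem_ball_zero_iff.mp hx
  have hy1 : ‖y‖ < 1 := mem_ball_zero_iff.mp hy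
  have hnx : ‖x‖ = t * ‖y‖ := by rw [hxy, norm_smul, Real.norm_of_nonneg ht0.le]
  have hmax : IsGreatest ((fun p => dist x y / Real.sqrt (dist x p * dist p y)) ''
      sphere (0 : EuclideanSpace ℝ (Fin n)) 1)
      (dist x y / Real.sqrt ((1 - ‖x‖) * (1 - ‖y‖))) := by
    constructor
    · refine ⟨‖y‖⁻¹ • y, ?_, ?_⟩
      · rw [mem_sphere_zero_iff_norm, norm_smul, norm_inv, norm_norm,
          inv_mul_cancel₀ (norm_ne_zero_iff.mpr hy0)]
      · have h1 : dist x (‖y‖⁻¹ • y) = 1 - ‖x‖ := by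
          rw [hnx, hxy]
          exact dist_smul_radial y hy0 t (hnx ▸ hx1.le)
        have h2 : dist (‖y‖⁻¹ • y) y = 1 - ‖y‖ := by
          have := dist_smul_radial y hy0 1 (by linarith)
          rwa [one_smul, one_mul, dist_comm] at this
        simp only [h1, h2]
    · rintro _ ⟨p, hp, rfl⟩
      have hp1 : ‖p‖ = 1 := mem_sphere_zero_iff_norm.mp hp
      have h1 : 1 - ‖x‖ ≤ dist x p := by
        rw [dist_comm, dist_eq_norm, ← hp1]
        exact norm_sub_norm_le p x
      have h2 : 1 - ‖y‖ ≤ dist p y := by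
        rw [dist_eq_norm, ← hp1]
        exact norm_sub_norm_le p y
      have hx' : 0 < 1 - ‖x‖ := sub_pos.mpr hx1
      have hy' : 0 < 1 - ‖y‖ := sub_pos.mpr hy1
      exact div_le_div_of_nonneg_left dist_nonneg (Real.sqrt_pos.mpr (mul_pos hx' hy'))
        (Real.sqrt_le_sqrt (mul_le_mul h1 h2 hy'.le dist_nonneg))
  rw [scTau, frontier_ball _ one_ne_zero, hmax.csSup_eq]
end

section
/- Let x, y ∈ Bⁿ with y ≠ 0 and x = t y for some real t with −1 ≤ t < 0 (so x and y lie on opposite sides of the origin on a common diameter and |x| ≤ |y|). Then τ̃_{Bⁿ}(x,y) = log(1 + |x−y|/√((1+|x|)(1−|y|))). -/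
/-!
For `p` on the unit sphere, `|x - p|² |p - y|²` is a concave quadratic polynomial in the inner
product `⟪y, p⟫ ∈ [-|y|, |y|]`, so it is minimal at an endpoint, that is at `p = ± y / |y|`. The
endpoint values are `(1 + |x|)² (1 - |y|)²` and `(1 - |x|)² (1 + |y|)²`, and `|x| ≤ |y|` makes the
first the smaller one. Hence the supremum is a maximum, attained at `p = y / |y|`.
-/

open Metric Set

open scoped RealInnerProductSpace

/-- Minimum of the concave quadratic on `[-b, b]`, where `s = |x| / |y|`, `b = |y|` and
`c = ⟪y, p⟫`. -/
lemma quad_lower_bound {s b c : ℝ} (hs0 : 0 < s) (hs1 : s ≤ 1) (hb0 : 0 < b) (hb1 : b < 1)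
    (hc1 : -b ≤ c) (hc2 : c ≤ b) :
    ((1 + s * b) * (1 - b)) ^ 2 ≤ (1 + s ^ 2 * b ^ 2 + 2 * s * c) * (1 + b ^ 2 - 2 * c) := by
  have h1 : 0 ≤ (1 - s) * (1 - s * b ^ 2) := by
    apply mul_nonneg (by linarith)
    nlinarith [mul_le_one₀ hs1 (sq_nonneg b) (by nlinarith : b ^ 2 ≤ 1)]
  have h2 : 0 ≤ s * (b + c) := mul_nonneg hs0.le (by linarith)
  have h3 : 0 ≤ 2 * (b - c) * ((1 - s) * (1 - s * b ^ 2) + 2 * (s * (b + c))) :=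
    mul_nonneg (by linarith) (by linarith)
  linear_combination h3

/-- Formula for the scale invariant Cassinian metric of the unit ball at diametrically
opposite radially aligned points (`x = t y`, `−1 ≤ t < 0`, so `|x| ≤ |y|`):
`τ̃_{Bⁿ}(x,y) = log(1 + |x−y|/√((1+|x|)(1−|y|)))`. -/
theorem stmt_4 (n : ℕ) (hn : 0 < n) (x y : EuclideanSpace ℝ (Fin n))
    (hx : x ∈ ball (0 : EuclideanSpace ℝ (Fin n)) 1)
    (hy : y ∈ ball (0 : EuclideanSpace ℝ (Fin n)) 1) (hy0 : y ≠ 0)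
    (t : ℝ) (ht0 : -1 ≤ t) (ht1 : t < 0) (hxy : x = t • y) :
    scTau (ball 0 1) x y =
      Real.log (1 + dist x y / Real.sqrt ((1 + ‖x‖) * (1 - ‖y‖))) := by
  have hb0 : 0 < ‖y‖ := norm_pos_iff.mpr hy0
  have hb1 : ‖y‖ < 1 := by simpa using hy
  have hxn : ‖x‖ = -t * ‖y‖ := by rw [hxy, norm_smul, Real.norm_eq_abs, abs_of_neg ht1]
  have hpos : 0 < (1 + ‖x‖) * (1 - ‖y‖) :=
    mul_pos (by linarith [norm_nonneg x]) (by linarith)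
  unfold scTau
  rw [frontier_ball _ one_ne_zero]
  congr 2
  refine IsGreatest.csSup_eq ⟨⟨‖y‖⁻¹ • y, ?_, ?_⟩, ?_⟩
  · simp [norm_smul, hb0.ne']
  · have h1 : dist x (‖y‖⁻¹ • y) = 1 + ‖x‖ := by
      have hneg : t - ‖y‖⁻¹ < 0 := by linarith [inv_pos.mpr hb0]
      rw [hxn, hxy, dist_eq_norm, ← sub_smul, norm_smul, Real.norm_eq_abs, abs_of_neg hneg]
      field_simp
      ring
    have h2 : dist (‖y‖⁻¹ • y) y = 1 - ‖y‖ := by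
      have hp : 0 < ‖y‖⁻¹ - 1 := by linarith [(one_lt_inv₀ hb0).mpr hb1]
      have e : ‖y‖⁻¹ • y - y = (‖y‖⁻¹ - 1) • y := by rw [sub_smul, one_smul]
      rw [dist_eq_norm, e, norm_smul, Real.norm_eq_abs, abs_of_pos hp]
      field_simp
    simp only [h1, h2]
  · rintro _ ⟨p, hp, rfl⟩
    have hp1 : ‖p‖ = 1 := by simpa using hp
    have hc := abs_le.mp (abs_real_inner_le_norm y p)
    rw [hp1, mul_one] at hc
    have e1 : dist x p ^ 2 = 1 + (-t) ^ 2 * ‖y‖ ^ 2 + 2 * (-t) * ⟪y, p⟫ := by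
      rw [dist_eq_norm, norm_sub_sq_real, hxn, hp1, hxy, real_inner_smul_left]
      ring
    have e2 : dist p y ^ 2 = 1 + ‖y‖ ^ 2 - 2 * ⟪y, p⟫ := by
      rw [dist_comm, dist_eq_norm, norm_sub_sq_real, hp1]
      ring
    have key : (1 + ‖x‖) * (1 - ‖y‖) ≤ dist x p * dist p y := by
      refine (sq_le_sq₀ hpos.le (by positivity)).mp ?_
      rw [mul_pow (dist x p), e1, e2, hxn]
      exact quad_lower_bound (by linarith) (by linarith) hb0 hb1 hc.1 hc.2
    exact div_le_div_of_nonneg_left dist_nonneg (Real.sqrt_pos.mpr hpos) (Real.sqrt_le_sqrt key)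
end

section
/- For every t ∈ [0, 2), log(1 + 2t/√(4 − t²)) ≥ (19/25) t. Consequently, for all x, y ∈ Bⁿ, τ̃_{Bⁿ}(x,y) ≥ (19/25)|x−y|, so the identity map from (Bⁿ, τ̃_{Bⁿ}) to Bⁿ with the Euclidean metric is Lipschitz-uniformly continuous. -/
/-!
Scalar bound: by AM-GM, `√(4 - t²) ≤ (164 - 25 t²) / 80`, with equality at `t = 6/5`, close to the
minimizer `t ≈ 1.15` of `log(1 + 2t/√(4 - t²)) / t`. A quartic upper bound for `exp ((19/25) t)`
then reduces the claim to the positivity of a quintic on `[0, 2]`. This quintic is convex, and its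
minimum is compared with a nearly horizontal tangent at `t = 23/20` (`quintic_nonneg`).

Ball: let `t = |x - y|`. It suffices to find a point `p` of the unit sphere with
`|x - p| |p - y| ≤ 1 - t²/4`, since then `t / √(|x - p| |p - y|) ≥ 2t / √(4 - t²)`. If
`|y| ≤ |x| = r`, the radial projection `p = x / r` works: writing `d = |p - y|`, Stewart's identity
`t² = r d² + (1 - r)(|y|² - r)` turns the left side of the claim `4 (1 - r) d + t² ≤ 4` into an
increasing function of `d` and `|y|`, equal to `4` at the extreme values `|y| = r`, `d = 1 + r`
(`exists_sphere_mul_dist_le`).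
-/

open Metric Set

/-- A degree-four Taylor polynomial of `exp` with its top coefficient enlarged from `1/24`, so that
it dominates `exp` up to `38/25 = (19/25) * 2`. -/
lemma exp_le_quartic {s : ℝ} (h0 : 0 ≤ s) (h1 : s ≤ 38 / 25) :
    Real.exp s ≤ 1 + s + s ^ 2 / 2 + s ^ 3 / 6 + 593 / 10000 * s ^ 4 := by
  -- The library's remainder estimate needs an argument at most `1`, so it is applied to `s / 2`.
  obtain ⟨x, rfl⟩ : ∃ x, s = 2 * x := ⟨s / 2, by ring⟩
  have hx0 : 0 ≤ x := by linarith
  have hx1 : x ≤ 19 / 25 := by linarith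
  have hE : Real.exp x ≤ 1 + x + x ^ 2 / 2 + x ^ 3 / 6 + x ^ 4 * (5 / 96) := by
    have h := Real.exp_bound' hx0 (by linarith) (n := 4) (by norm_num)
    norm_num [Finset.sum_range_succ, Nat.factorial] at h
    linarith
  have hsq : Real.exp (2 * x) = Real.exp x ^ 2 := by rw [two_mul, Real.exp_add, sq]
  have h2 : Real.exp x ^ 2 ≤ (1 + x + x ^ 2 / 2 + x ^ 3 / 6 + x ^ 4 * (5 / 96)) ^ 2 :=
    pow_le_pow_left₀ (Real.exp_pos x).le hE 2
  have e5 : x ^ 5 ≤ 19 / 25 * x ^ 4 := by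
    nlinarith [mul_le_mul_of_nonneg_right hx1 (pow_nonneg hx0 4)]
  have e6 : x ^ 6 ≤ 19 / 25 * x ^ 5 := by
    nlinarith [mul_le_mul_of_nonneg_right hx1 (pow_nonneg hx0 5)]
  have e7 : x ^ 7 ≤ 19 / 25 * x ^ 6 := by
    nlinarith [mul_le_mul_of_nonneg_right hx1 (pow_nonneg hx0 6)]
  have e8 : x ^ 8 ≤ 19 / 25 * x ^ 7 := by
    nlinarith [mul_le_mul_of_nonneg_right hx1 (pow_nonneg hx0 7)]
  have h4 : 0 ≤ x ^ 4 := pow_nonneg hx0 4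
  rw [hsq]
  linarith

/-- The inequality that remains after clearing denominators. The right side minus the left is a
quintic in `t` whose coefficients in degrees two to five are positive, so for `t ≥ 0` it lies above its tangent at `23/20`, which is close to its minimizer. -/
lemma quintic_nonneg {t : ℝ} (h0 : 0 ≤ t) (h2 : t ≤ 2) :
    (164 - 25 * t ^ 2) * (19 / 25 + (19 / 25) ^ 2 * t / 2 + (19 / 25) ^ 3 * t ^ 2 / 6
      + 593 / 10000 * (19 / 25) ^ 4 * t ^ 3) ≤ 160 := by
  have k0 := sq_nonneg (t - 23 / 20)
  have k1 := mul_nonneg h0 k0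
  have k2 := mul_nonneg (pow_nonneg h0 2) k0
  have k3 := mul_nonneg (pow_nonneg h0 3) k0
  linarith

lemma scalar_bound {t : ℝ} (h0 : 0 ≤ t) (h2 : t < 2) :
    (19 / 25) * t ≤ Real.log (1 + 2 * t / Real.sqrt (4 - t ^ 2)) := by
  have hv : 0 < 4 - t ^ 2 := by nlinarith
  have hs : 0 < Real.sqrt (4 - t ^ 2) := Real.sqrt_pos.2 hv
  have hsq := Real.sq_sqrt hv.le
  have hden : 0 < 164 - 25 * t ^ 2 := by linarith
  -- AM-GM for `√(4 - t²)` and `8/5`, the value of `√(4 - t²)` at `t = 6/5`.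
  have hle : Real.sqrt (4 - t ^ 2) ≤ (164 - 25 * t ^ 2) / 80 := by
    nlinarith [sq_nonneg (Real.sqrt (4 - t ^ 2) - 8 / 5)]
  have hfrac : 160 * t / (164 - 25 * t ^ 2) ≤ 2 * t / Real.sqrt (4 - t ^ 2) := by
    rw [div_le_div_iff₀ hden hs]
    nlinarith [mul_le_mul_of_nonneg_left hle h0]
  rw [Real.le_log_iff_exp_le (by positivity)]
  refine (exp_le_quartic (s := 19 / 25 * t) (by linarith) (by linarith)).trans
    (le_trans ?_ (add_le_add_right hfrac 1))
  have hq := mul_le_mul_of_nonneg_left (quintic_nonneg h0 h2.le) h0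
  have : 19 / 25 * t + (19 / 25 * t) ^ 2 / 2 + (19 / 25 * t) ^ 3 / 6
      + 593 / 10000 * (19 / 25 * t) ^ 4 ≤ 160 * t / (164 - 25 * t ^ 2) := by
    rw [le_div_iff₀ hden]
    linarith
  linarith

/-- The geometric core: the radial projection to the unit sphere of whichever of `x`, `y` has the
larger norm is close enough to both points. -/
lemma exists_sphere_mul_dist_le {E : Type*} [NormedAddCommGroup E] [InnerProductSpace ℝ E]
    {x y : E} (hx : ‖x‖ < 1) (hy : ‖y‖ < 1) (hxy : x ≠ y) :
    ∃ p : E, ‖p‖ = 1 ∧ dist x p * dist p y ≤ 1 - dist x y ^ 2 / 4 := by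
  wlog h : ‖y‖ ≤ ‖x‖ generalizing x y
  · obtain ⟨p, hp, hle⟩ := this hy hx hxy.symm (le_of_not_ge h)
    refine ⟨p, hp, ?_⟩
    rwa [mul_comm, dist_comm p y, dist_comm x p, dist_comm x y]
  have hr : 0 < ‖x‖ := by
    rw [norm_pos_iff]
    rintro rfl
    exact hxy (by simpa [eq_comm] using h)
  obtain ⟨p, hp⟩ : ∃ p, p = ‖x‖⁻¹ • x := ⟨_, rfl⟩
  have hxp : x = ‖x‖ • p := by rw [hp, smul_inv_smul₀ hr.ne']
  have hp1 : ‖p‖ = 1 := by rw [hp, norm_smul, norm_inv, norm_norm, inv_mul_cancel₀ hr.ne']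
  refine ⟨p, hp1, ?_⟩
  have hd1 : dist x p = 1 - ‖x‖ := by
    have : x - p = (‖x‖ - 1) • p := by rw [sub_smul, one_smul, ← hxp]
    rw [dist_eq_norm, this, norm_smul, hp1, mul_one, Real.norm_eq_abs, abs_of_neg (by linarith)]
    ring
  have hin : inner ℝ x y = ‖x‖ * inner ℝ p y := by
    conv_lhs => rw [hxp]
    rw [real_inner_smul_left]
  have ht : dist x y ^ 2 = ‖x‖ ^ 2 - 2 * (‖x‖ * inner ℝ p y) + ‖y‖ ^ 2 := by
    rw [dist_eq_norm, norm_sub_sq_real, hin]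
  have hd : dist p y ^ 2 = 1 - 2 * inner ℝ p y + ‖y‖ ^ 2 := by
    rw [dist_eq_norm, norm_sub_sq_real, hp1]
    ring
  have stewart : dist x y ^ 2 = ‖x‖ * dist p y ^ 2 + (1 - ‖x‖) * (‖y‖ ^ 2 - ‖x‖) := by
    rw [ht, hd]
    ring
  have hd2 : dist p y ≤ 1 + ‖x‖ := by
    rw [dist_eq_norm]
    exact (norm_sub_le p y).trans (by linarith)
  have hd0 : 0 ≤ dist p y := dist_nonneg
  have hy2 : ‖y‖ ^ 2 ≤ ‖x‖ ^ 2 := pow_le_pow_left₀ (norm_nonneg y) h 2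
  have hdsq : dist p y ^ 2 ≤ (1 + ‖x‖) ^ 2 := pow_le_pow_left₀ hd0 hd2 2
  have h1 := mul_le_mul_of_nonneg_left hd2 (sub_nonneg.2 hx.le)
  have h2 := mul_le_mul_of_nonneg_left hdsq hr.le
  have h3 := mul_le_mul_of_nonneg_left hy2 (sub_nonneg.2 hx.le)
  rw [hd1, stewart]
  linarith

/-- The supremum defining `scTau` for the unit ball is over a bounded set, so it is not the junk
value of `sSup`. -/
lemma bddAbove_scTau_ball {n : ℕ} {x y : EuclideanSpace ℝ (Fin n)} (hx : ‖x‖ < 1) (hy : ‖y‖ < 1) :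
    BddAbove ((fun p => dist x y / Real.sqrt (dist x p * dist p y)) ''
      frontier (ball (0 : EuclideanSpace ℝ (Fin n)) 1)) := by
  refine ⟨dist x y / Real.sqrt ((1 - ‖x‖) * (1 - ‖y‖)), ?_⟩
  rintro _ ⟨p, hp, rfl⟩
  rw [frontier_ball _ one_ne_zero, mem_sphere_zero_iff_norm] at hp
  have hx' : 0 < 1 - ‖x‖ := sub_pos.2 hx
  have hy' : 0 < 1 - ‖y‖ := sub_pos.2 hy
  have h1 : 1 - ‖x‖ ≤ dist x p := by
    rw [dist_comm, dist_eq_norm, ← hp]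
    exact norm_sub_norm_le p x
  have h2 : 1 - ‖y‖ ≤ dist p y := by
    rw [dist_eq_norm, ← hp]
    exact norm_sub_norm_le p y
  have h3 : 0 < Real.sqrt ((1 - ‖x‖) * (1 - ‖y‖)) := Real.sqrt_pos.2 (mul_pos hx' hy')
  exact div_le_div_of_nonneg_left dist_nonneg h3
    (Real.sqrt_le_sqrt (mul_le_mul h1 h2 hy'.le dist_nonneg))

/-- The scalar bound `log(1 + 2t/√(4 − t²)) ≥ (19/25) t` on `[0,2)`, and consequently
`τ̃_{Bⁿ}(x,y) ≥ (19/25)|x−y|`: the identity map from `(Bⁿ, τ̃)` to `(Bⁿ, |·|)` is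
Lipschitz-uniformly continuous. -/
theorem stmt_6 (n : ℕ) (hn : 0 < n) :
    (∀ t ∈ Set.Ico (0 : ℝ) 2,
      (19 / 25) * t ≤ Real.log (1 + 2 * t / Real.sqrt (4 - t ^ 2))) ∧
    ∀ x ∈ ball (0 : EuclideanSpace ℝ (Fin n)) 1,
      ∀ y ∈ ball (0 : EuclideanSpace ℝ (Fin n)) 1,
        (19 / 25) * dist x y ≤ scTau (ball 0 1) x y := by
  refine ⟨fun t ht => scalar_bound ht.1 ht.2, fun x hx y hy => ?_⟩
  rw [mem_ball_zero_iff] at hx hy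
  have ht2 : dist x y < 2 := by
    rw [dist_eq_norm]
    linarith [norm_sub_le x y]
  unfold scTau
  refine (scalar_bound dist_nonneg ht2).trans (Real.log_le_log (by positivity) ?_)
  refine add_le_add_right ?_ 1
  rcases eq_or_ne x y with rfl | hxy
  · rw [dist_self, mul_zero, zero_div]
    refine Real.sSup_nonneg ?_
    rintro _ ⟨p, -, rfl⟩
    positivity
  obtain ⟨p, hp, hle⟩ := exists_sphere_mul_dist_le hx hy hxy
  refine le_csSup_of_le (bddAbove_scTau_ball hx hy)
    ⟨p, by rwa [frontier_ball _ one_ne_zero, mem_sphere_zero_iff_norm], rfl⟩ ?_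
  have hxp : 0 < dist x p := dist_pos.2 (by rintro rfl; linarith)
  have hpy : 0 < dist p y := dist_pos.2 (by rintro rfl; linarith)
  have hs : 0 < Real.sqrt (dist x p * dist p y) := Real.sqrt_pos.2 (mul_pos hxp hpy)
  have hv : 0 < 4 - dist x y ^ 2 := by nlinarith [dist_nonneg (x := x) (y := y)]
  have hsv : 0 < Real.sqrt (4 - dist x y ^ 2) := Real.sqrt_pos.2 hv
  have key : 2 * Real.sqrt (dist x p * dist p y) ≤ Real.sqrt (4 - dist x y ^ 2) := by
    refine Real.le_sqrt_of_sq_le ?_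
    rw [mul_pow, Real.sq_sqrt (mul_pos hxp hpy).le]
    linarith
  rw [div_le_div_iff₀ hsv hs]
  nlinarith [mul_le_mul_of_nonneg_left key (dist_nonneg (x := x) (y := y))]
end

section
/- Let D ⊊ ℝⁿ be a domain with diam D < ∞ and set r = √(n/(2n+2)) · diam D. Then for all distinct x, y ∈ D with |x−y| < 2r: τ̃_D(x,y) ≥ log(1 + 2|x−y|/√(4r² − |x−y|²)) ≥ (19/25) |x−y|/r. Equality holds in the first inequality when D = Bⁿ(z, r) is the open ball of radius r centered at z = (x+y)/2. -/
/-! Write `d = |x - y|`.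

First inequality: the line through `x` and `y` leaves the bounded set `D` at a frontier point
`p` beyond `x` and at a frontier point `q` beyond `y` (`exists_ray_mem_frontier`). Since `p` and `q`
lie in the closure of `D`, `|p - q| ≤ diam D`, and `diam D ≤ 2r` because `n ≥ 1`; no appeal
to Jung's theorem is needed. The nearer of the two exit points satisfies
`|x - p| |p - y| ≤ r² - d²/4` (`exists_frontier_mul_le`), and evaluating the
supremum at that point gives the bound.

Second inequality: with `W = √(4r² - d²)` and `z = d / (W + d)` one has
`1 + 2d/W = (1 + z)/(1 - z)` and `(1 - z)² + z² = (2r/(W + d))²`. Truncating the series of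
`artanh z` after the fifth power reduces the claim to a polynomial inequality of degree six in `z`
(`log_bound`).

Equality: for `p` on the sphere centred at the midpoint of `x`, `y`, Cauchy–Schwarz gives
`|x - p| |p - y| ≥ r² - d²/4` (`sphere_mul_ge`), so the supremum is also at most the bound. -/

open Metric Set

/-- A ray starting in a bounded set `D` meets its frontier. -/
theorem exists_ray_mem_frontier {E : Type*} [NormedAddCommGroup E] [NormedSpace ℝ E] {D : Set E}
    (hD : Bornology.IsBounded D) {x v : E} (hx : x ∈ D) (hv : v ≠ 0) :
    ∃ s : ℝ, 0 ≤ s ∧ x + s • v ∈ frontier D := by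
  have hpre : IsPreconnected ((fun s : ℝ => x + s • v) '' Ici 0) :=
    isPreconnected_Ici.image _ (by fun_prop)
  have hv' : 0 < ‖v‖ := norm_pos_iff.2 hv
  have hdiam : 0 ≤ diam D := diam_nonneg
  have h1 : (((fun s : ℝ => x + s • v) '' Ici 0) ∩ D).Nonempty :=
    ⟨x, ⟨0, by simp, by simp⟩, hx⟩
  have h2 : (((fun s : ℝ => x + s • v) '' Ici 0) \ D).Nonempty := by
    refine ⟨x + ((diam D + 1) / ‖v‖) • v, ⟨_, ?_, rfl⟩, fun hmem => ?_⟩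
    · simp only [mem_Ici]; positivity
    · have := dist_le_diam_of_mem hD hmem hx
      rw [dist_eq_norm, add_sub_cancel_left, norm_smul, Real.norm_of_nonneg (by positivity),
        div_mul_cancel₀ _ hv'.ne'] at this
      linarith
  by_contra! hno
  -- Off the frontier, the ray is covered by the disjoint open sets `interior D`, `(closure D)ᶜ`.
  have hsplit : ∀ z ∈ (fun s : ℝ => x + s • v) '' Ici 0, z ∈ interior D ∨ z ∈ (closure D)ᶜ := by
    rintro _ ⟨s, hs, rfl⟩
    by_contra! h
    exact hno s hs ⟨not_not.1 h.2, h.1⟩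
  obtain ⟨a, ha, haD⟩ := h1
  obtain ⟨b, hb, hbD⟩ := h2
  obtain ⟨c, -, hc1, hc2⟩ := hpre _ _ isOpen_interior isClosed_closure.isOpen_compl hsplit
    ⟨a, ha, (hsplit a ha).resolve_right fun h => h (subset_closure haD)⟩
    ⟨b, hb, (hsplit b hb).resolve_left fun h => hbD (interior_subset h)⟩
  exact hc2 (interior_subset_closure hc1)

/-- The point is the nearer of two frontier points on the line through `x` and `y`, one beyond `x`
and one beyond `y`. -/
theorem exists_frontier_mul_le {E : Type*} [NormedAddCommGroup E] [NormedSpace ℝ E] {D : Set E}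
    (hD : Bornology.IsBounded D) {x y : E} (hx : x ∈ D) (hy : y ∈ D) (hxy : x ≠ y) {r : ℝ}
    (hr : diam D ≤ 2 * r) :
    ∃ p ∈ frontier D, dist x p * dist p y ≤ r ^ 2 - dist x y ^ 2 / 4 := by
  obtain ⟨s, hs, hp⟩ := exists_ray_mem_frontier hD hx (sub_ne_zero.2 hxy)
  obtain ⟨t, ht, hq⟩ := exists_ray_mem_frontier hD hy (sub_ne_zero.2 hxy.symm)
  have hd : 0 < dist x y := dist_pos.2 hxy
  have hpq : (1 + s + t) * dist x y ≤ 2 * r := by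
    have h := dist_le_diam_of_mem hD.closure (frontier_subset_closure hp)
      (frontier_subset_closure hq)
    have e : x + s • (x - y) - (y + t • (y - x)) = (1 + s + t) • (x - y) := by module
    rw [diam_closure, dist_eq_norm, e, norm_smul, Real.norm_of_nonneg (by positivity),
      ← dist_eq_norm] at h
    exact h.trans hr
  have key : ∀ a : ℝ, 0 ≤ a → (1 + 2 * a) * dist x y ≤ 2 * r →
      (a * dist x y) * ((1 + a) * dist x y) ≤ r ^ 2 - dist x y ^ 2 / 4 := by
    intro a ha h
    have := pow_le_pow_left₀ (by positivity) h 2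
    nlinarith
  have near : ∀ u w : E, ∀ a : ℝ, 0 ≤ a → dist u (u + a • (u - w)) = a * dist u w ∧
      dist (u + a • (u - w)) w = (1 + a) * dist u w := by
    intro u w a ha
    have e : u + a • (u - w) - w = (1 + a) • (u - w) := by module
    constructor
    · rw [dist_self_add_right, norm_smul, Real.norm_of_nonneg ha, dist_eq_norm]
    · rw [dist_eq_norm, e, norm_smul, Real.norm_of_nonneg (by positivity), dist_eq_norm]
  rcases le_total s t with h | h
  · refine ⟨_, hp, ?_⟩
    rw [(near x y s hs).1, (near x y s hs).2]
    exact key s hs (le_trans (mul_le_mul_of_nonneg_right (by linarith) hd.le) hpq)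
  · refine ⟨_, hq, ?_⟩
    rw [mul_comm, dist_comm x, dist_comm _ y, (near y x t ht).1, (near y x t ht).2,
      dist_comm y x]
    exact key t ht (le_trans (mul_le_mul_of_nonneg_right (by linarith) hd.le) hpq)

/-- With `a = p - (x + y)/2` and `b = (x - y)/2`, this is Cauchy–Schwarz applied to
`⟪a + b, a - b⟫ = |a|² - |b|²`. -/
theorem sphere_mul_ge {E : Type*} [NormedAddCommGroup E] [InnerProductSpace ℝ E] {x y p : E}
    {r : ℝ} (hp : dist p (midpoint ℝ x y) = r) :
    r ^ 2 - dist x y ^ 2 / 4 ≤ dist x p * dist p y := by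
  have e1 : p - y = (p - midpoint ℝ x y) + (2⁻¹ : ℝ) • (x - y) := by
    rw [midpoint_eq_smul_add, invOf_eq_inv]; module
  have e2 : p - x = (p - midpoint ℝ x y) - (2⁻¹ : ℝ) • (x - y) := by
    rw [midpoint_eq_smul_add, invOf_eq_inv]; module
  have h := real_inner_le_norm (p - y) (p - x)
  rw [dist_comm x p, mul_comm, dist_eq_norm p y, dist_eq_norm p x]
  refine le_trans (le_of_eq ?_) h
  rw [e1, e2, ← hp, dist_eq_norm, dist_eq_norm]
  generalize p - midpoint ℝ x y = a
  generalize x - y = b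
  rw [inner_add_left, inner_sub_right, inner_sub_right, real_inner_comm a (_ • b),
    real_inner_self_eq_norm_sq, real_inner_self_eq_norm_sq, norm_smul]
  norm_num
  ring

/-- The first factor is the part of `(1 + z²/3 + z⁴/5)²` of degree at most four. The minimum over
`z`, attained near `z = 5/12`, exceeds the left-hand side by less than `0.004`. -/
theorem poly_bound (z : ℝ) : (361 / 625 : ℝ) ≤
    (1 + 2 * z ^ 2 / 3 + 23 / 45 * z ^ 4) * ((1 - z) ^ 2 + z ^ 2) := by
  nlinarith [sq_nonneg (z - 5/12), sq_nonneg (z^2 - 25/144), sq_nonneg (z*(z-5/12)),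
    sq_nonneg (z^2*(z - 5/12)), sq_nonneg (z^3-z^2/2),
    sq_nonneg (z^3 - 3*z/10)]

/-- The bound `(1/t) log(1 + 2t/√(4 - t²)) ≥ 19/25` on `(0, 2)`, for `t = d / r`. -/
theorem log_bound {d r : ℝ} (hd : 0 < d) (hdr : d < 2 * r) :
    (19 / 25) * (d / r) ≤ Real.log (1 + 2 * d / Real.sqrt (4 * r ^ 2 - d ^ 2)) := by
  have hr : 0 < r := by linarith
  have hpos : 0 < 4 * r ^ 2 - d ^ 2 := by nlinarith
  have hW2 := Real.sq_sqrt hpos.le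
  have hW := Real.sqrt_pos.2 hpos
  set W := Real.sqrt (4 * r ^ 2 - d ^ 2)
  obtain ⟨z, hz⟩ : ∃ z, z = d / (W + d) := ⟨_, rfl⟩
  obtain ⟨ρ, hρ⟩ : ∃ ρ, ρ = 2 * r / (W + d) := ⟨_, rfl⟩
  have hz0 : 0 < z := by rw [hz]; positivity
  have hρ0 : 0 < ρ := by rw [hρ]; positivity
  have hz1 : z < 1 := by rw [hz, div_lt_one (by positivity)]; linarith
  have hzz : (1 - z) ^ 2 + z ^ 2 = ρ ^ 2 := by
    rw [hz, hρ]; field_simp; nlinarith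
  have hlog : 1 + 2 * d / W = (1 + z) / (1 - z) := by
    have : 1 - z = W / (W + d) := by rw [hz]; field_simp; ring
    rw [this, hz]; field_simp; ring
  have hdr' : d / r = 2 * z / ρ := by rw [hz, hρ]; field_simp
  have hseries := Real.sum_range_le_log_div hz0.le hz1 3
  -- `hseries` is the degree-five truncation of the series of `artanh z`.
  norm_num [Finset.sum_range_succ] at hseries
  have hA : 19 / 25 ≤ (1 + z ^ 2 / 3 + z ^ 4 / 5) * ρ := by
    refine le_of_sq_le_sq ?_ (by positivity)
    have h1 := poly_bound z
    rw [hzz] at h1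
    have h2 : (1 + 2 * z ^ 2 / 3 + 23 / 45 * z ^ 4) * ρ ^ 2 ≤
        (1 + z ^ 2 / 3 + z ^ 4 / 5) ^ 2 * ρ ^ 2 := by
      gcongr
      have : 0 < z ^ 6 := by positivity
      have : 0 < z ^ 8 := by positivity
      nlinarith
    rw [mul_pow]
    linarith
  rw [hlog, hdr']
  have h3 : 19 / 25 * (2 * z / ρ) ≤ 2 * z * (1 + z ^ 2 / 3 + z ^ 4 / 5) := by
    rw [mul_div_assoc', div_le_iff₀ hρ0]
    nlinarith
  linarith

theorem two_d_div {d r : ℝ} :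
    2 * d / Real.sqrt (4 * r ^ 2 - d ^ 2) = d / Real.sqrt (r ^ 2 - d ^ 2 / 4) := by
  have : 4 * r ^ 2 - d ^ 2 = 2 ^ 2 * (r ^ 2 - d ^ 2 / 4) := by ring
  rw [this, Real.sqrt_mul (by norm_num), Real.sqrt_sq (by norm_num),
    mul_div_mul_left _ _ two_ne_zero]

/-- Lower bound for the scale invariant Cassinian metric on a bounded domain `D` with
`r = √(n/(2n+2)) diam D`:
`τ̃_D(x,y) ≥ log(1 + 2|x−y|/√(4r² − |x−y|²)) ≥ (19/25)|x−y|/r`, with equality in the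
first inequality when `D` is the ball of radius `r` centered at the midpoint of `x,y`. -/
theorem stmt_7 (n : ℕ) (hn : 0 < n) (D : Set (EuclideanSpace ℝ (Fin n)))
    (hDopen : IsOpen D) (hDconn : IsConnected D) (hDne : D ≠ univ)
    (hDbdd : Bornology.IsBounded D)
    (r : ℝ) (hr : r = Real.sqrt (n / (2 * n + 2)) * Metric.diam D)
    (x y : EuclideanSpace ℝ (Fin n)) (hx : x ∈ D) (hy : y ∈ D) (hxy : x ≠ y)
    (hd : dist x y < 2 * r) :
    (Real.log (1 + 2 * dist x y / Real.sqrt (4 * r ^ 2 - dist x y ^ 2)) ≤ scTau D x y ∧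
      (19 / 25) * (dist x y / r) ≤
        Real.log (1 + 2 * dist x y / Real.sqrt (4 * r ^ 2 - dist x y ^ 2))) ∧
    (D = ball (midpoint ℝ x y) r →
      scTau D x y =
        Real.log (1 + 2 * dist x y / Real.sqrt (4 * r ^ 2 - dist x y ^ 2))) := by
  have hd0 : 0 < dist x y := dist_pos.2 hxy
  have hr0 : 0 < r := by linarith
  have hdiam : diam D ≤ 2 * r := by
    have hn1 : (1 : ℝ) ≤ n := by exact_mod_cast hn
    have hs : (1 / 2 : ℝ) ≤ Real.sqrt (n / (2 * n + 2)) := by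
      apply Real.le_sqrt_of_sq_le
      rw [le_div_iff₀ (by positivity)]
      linarith
    have : (0 : ℝ) ≤ diam D := diam_nonneg
    rw [hr]
    nlinarith
  have hpos : 0 < r ^ 2 - dist x y ^ 2 / 4 := by nlinarith
  have hfr : ∀ p ∈ frontier D, ∀ u ∈ D, 0 < dist u p := by
    rintro p hp u hu
    refine dist_pos.2 ?_
    rintro rfl
    rw [hDopen.frontier_eq] at hp
    exact hp.2 hu
  have hprod : ∀ p ∈ frontier D, 0 < dist x p * dist p y := fun p hp =>
    mul_pos (hfr p hp x hx) (dist_comm p y ▸ hfr p hp y hy)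
  have hbdd : BddAbove ((fun p => dist x y / Real.sqrt (dist x p * dist p y)) '' frontier D) := by
    refine IsCompact.bddAbove_image ?_ ?_
    · exact isCompact_of_isClosed_isBounded isClosed_frontier
        (hDbdd.closure.subset frontier_subset_closure)
    · refine ContinuousOn.div (by fun_prop) (by fun_prop) fun p hp => ?_
      exact (Real.sqrt_pos.2 (hprod p hp)).ne'
  have hlow : Real.log (1 + 2 * dist x y / Real.sqrt (4 * r ^ 2 - dist x y ^ 2)) ≤
      scTau D x y := by
    obtain ⟨p, hp, hle⟩ := exists_frontier_mul_le hDbdd hx hy hxy hdiam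
    refine Real.log_le_log (by positivity) ?_
    gcongr
    rw [two_d_div]
    refine le_trans ?_ (le_csSup hbdd ⟨p, hp, rfl⟩)
    have := Real.sqrt_pos.2 (hprod p hp)
    dsimp only
    gcongr
  refine ⟨⟨hlow, log_bound hd0 hd⟩, fun hball => le_antisymm ?_ hlow⟩
  -- `Real.sSup_nonneg` holds whether or not the set is bounded or nonempty.
  have hsup : 0 ≤ sSup ((fun p => dist x y / Real.sqrt (dist x p * dist p y)) '' frontier D) := by
    apply Real.sSup_nonneg
    rintro _ ⟨p, -, rfl⟩
    positivity
  refine Real.log_le_log (by linarith) ?_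
  gcongr
  rw [two_d_div]
  refine Real.sSup_le ?_ (by positivity)
  rintro _ ⟨p, hp, rfl⟩
  have hps : dist p (midpoint ℝ x y) = r := by
    rw [hball] at hp
    exact mem_sphere.1 (frontier_ball_subset_sphere hp)
  have := sphere_mul_ge hps
  have := Real.sqrt_pos.2 hpos
  dsimp only
  gcongr
end

section
/- For all real a, b with 0 ≤ a ≤ b < 1: (1 + b − 2a)/√((1−a)(1−b)) ≥ (2 + b − a)/(2 − b + a). -/
/-- The scalar inequality `(1 + b − 2a)/√((1−a)(1−b)) ≥ (2 + b − a)/(2 − b + a)` for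
`0 ≤ a ≤ b < 1`. -/
theorem stmt_9 (a b : ℝ) (ha : 0 ≤ a) (hab : a ≤ b) (hb : b < 1) :
    (2 + b - a) / (2 - b + a) ≤ (1 + b - 2 * a) / Real.sqrt ((1 - a) * (1 - b)) := by
  have hs : 0 < Real.sqrt ((1 - a) * (1 - b)) :=
    Real.sqrt_pos.mpr (mul_pos (by linarith) (by linarith))
  -- AM–GM for `1 - a` and `1 - b`.
  have hamgm : Real.sqrt ((1 - a) * (1 - b)) ≤ (2 - a - b) / 2 := by
    rw [Real.sqrt_le_left (by linarith)]
    nlinarith [sq_nonneg (a - b)]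
  rw [div_le_div_iff₀ (by linarith) hs]
  -- The remaining gap is half of `2b - 2a - b² + 6ab - 5a² = (b - a) * (2 - b + 5a)`.
  have hgap : 0 ≤ (b - a) * (2 - b + 5 * a) :=
    mul_nonneg (by linarith) (by linarith)
  calc (2 + b - a) * Real.sqrt ((1 - a) * (1 - b))
      ≤ (2 + b - a) * ((2 - a - b) / 2) :=
        mul_le_mul_of_nonneg_left hamgm (by linarith)
    _ ≤ (1 + b - 2 * a) * (2 - b + a) := by linarith
end

section
/- For all x, y ∈ Bⁿ, u_{Bⁿ}(x,y) ≥ 2 log((2 + |x−y|)/(2 − |x−y|)), with equality when y = −x; equivalently, if w = (|x−y|/2) e₁ (where e₁ is the first standard basis vector), then u_{Bⁿ}(x,y) ≥ u_{Bⁿ}(−w, w) = 2 log((2 + |x−y|)/(2 − |x−y|)). -/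
/-!
In the ball `d(z, ∂Bⁿ) = 1 - ‖z‖`. Put `r = |x - y|`, `a = 1 - ‖x‖`, `b = 1 - ‖y‖` and `m = √(ab)`,
the geometric mean. Then `m ≤ max a b`, while `m ≤ (a + b) / 2 ≤ (2 - r) / 2` by AM-GM and the
triangle inequality `r ≤ ‖x‖ + ‖y‖`. Hence
`(r + max a b) / m ≥ r / m + 1 ≥ 2 r / (2 - r) + 1 = (2 + r) / (2 - r)`,
and every step is an equality for antipodal points.
-/

open Metric Set

/-- The Gromov hyperbolic metric
`u_D(x,y) = 2 log((|x−y| + max{d(x,∂D), d(y,∂D)})/√(d(x,∂D) d(y,∂D)))`. -/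
noncomputable def uMet {n : ℕ} (D : Set (EuclideanSpace ℝ (Fin n)))
    (x y : EuclideanSpace ℝ (Fin n)) : ℝ :=
  2 * Real.log ((dist x y + max (Metric.infDist x (frontier D)) (Metric.infDist y (frontier D))) /
    Real.sqrt (Metric.infDist x (frontier D) * Metric.infDist y (frontier D)))

/-- In dimension zero the frontier of the ball is empty and this fails, hence `0 < n`. -/
lemma infDist_frontier_unitBall {n : ℕ} (hn : 0 < n) {x : EuclideanSpace ℝ (Fin n)}
    (hx : ‖x‖ < 1) :
    Metric.infDist x (frontier (ball (0 : EuclideanSpace ℝ (Fin n)) 1)) = 1 - ‖x‖ := by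
  rw [frontier_ball _ one_ne_zero]
  -- The nearest boundary point is the unit vector `e` on the ray through `x`.
  obtain ⟨e, he, hxe⟩ : ∃ e : EuclideanSpace ℝ (Fin n), ‖e‖ = 1 ∧ x = ‖x‖ • e := by
    by_cases h0 : x = 0
    · exact ⟨EuclideanSpace.single ⟨0, hn⟩ 1, by simp, by simp [h0]⟩
    · have hne : ‖x‖ ≠ 0 := norm_ne_zero_iff.mpr h0
      refine ⟨‖x‖⁻¹ • x, ?_, ?_⟩
      · rw [norm_smul, norm_inv, norm_norm, inv_mul_cancel₀ hne]
      · rw [smul_smul, mul_inv_cancel₀ hne, one_smul]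
  have hmem : e ∈ sphere (0 : EuclideanSpace ℝ (Fin n)) 1 := by simp [he]
  apply le_antisymm
  · have hdist : dist x e = 1 - ‖x‖ := by
      have hsub : x - e = (‖x‖ - 1) • e := by rw [sub_smul, one_smul, ← hxe]
      rw [dist_eq_norm, hsub, norm_smul, he, mul_one, Real.norm_eq_abs,
        abs_of_neg (by linarith)]
      ring
    exact (Metric.infDist_le_dist_of_mem hmem).trans hdist.le
  · refine (Metric.le_infDist ⟨e, hmem⟩).mpr fun z hz => ?_
    have hz1 : ‖z‖ = 1 := by simpa using hz
    have := norm_sub_norm_le z x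
    rw [dist_comm, dist_eq_norm]
    linarith

lemma uMet_unitBall_neg {n : ℕ} (hn : 0 < n) {x : EuclideanSpace ℝ (Fin n)} (hx : ‖x‖ < 1) :
    uMet (ball 0 1) x (-x) = 2 * Real.log ((2 + 2 * ‖x‖) / (2 - 2 * ‖x‖)) := by
  have hneg : ‖-x‖ < 1 := by rwa [norm_neg]
  have hd : dist x (-x) = 2 * ‖x‖ := by
    rw [dist_eq_norm, sub_neg_eq_add, ← two_smul ℝ x, norm_smul]
    simp
  have h1 : 1 - ‖x‖ ≠ 0 := by linarith
  have h2 : 2 - 2 * ‖x‖ ≠ 0 := by linarith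
  rw [uMet, infDist_frontier_unitBall hn hx, infDist_frontier_unitBall hn hneg, norm_neg, hd,
    max_self, Real.sqrt_mul_self (by linarith)]
  congr 2
  field_simp
  ring

/-- The inequality behind the lower bound, with `a`, `b` the distances to the boundary and `r` the
distance between the points. -/
lemma div_le_add_max_div_sqrt {a b r : ℝ} (ha : 0 < a) (hb : 0 < b) (hr : 0 ≤ r)
    (hab : r + a + b ≤ 2) :
    (2 + r) / (2 - r) ≤ (r + max a b) / Real.sqrt (a * b) := by
  have hm : 0 < Real.sqrt (a * b) := Real.sqrt_pos.mpr (mul_pos ha hb)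
  have hmax : Real.sqrt (a * b) ≤ max a b := by
    refine Real.sqrt_le_iff.mpr ⟨ha.le.trans (le_max_left _ _), ?_⟩
    rw [sq]
    exact mul_le_mul (le_max_left _ _) (le_max_right _ _) hb.le (ha.le.trans (le_max_left _ _))
  have hmean : Real.sqrt (a * b) ≤ (2 - r) / 2 := by
    have : Real.sqrt (a * b) ≤ (a + b) / 2 :=
      Real.sqrt_le_iff.mpr ⟨by positivity, by nlinarith [sq_nonneg (a - b)]⟩
    linarith
  rw [div_le_div_iff₀ (by linarith) hm]
  nlinarith [mul_le_mul_of_nonneg_left hmean hr,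
    mul_le_mul_of_nonneg_right hmax (show 0 ≤ 2 - r by linarith)]

/-- Sharp lower bound for the Gromov hyperbolic metric of the unit ball:
with `w = (|x−y|/2) e₁`, one has
`u_{Bⁿ}(−w,w) = 2 log((2 + |x−y|)/(2 − |x−y|)) ≤ u_{Bⁿ}(x,y)`,
with equality when `y = −x`. -/
theorem stmt_11 (n : ℕ) (hn : 0 < n) (x y : EuclideanSpace ℝ (Fin n))
    (hx : x ∈ ball (0 : EuclideanSpace ℝ (Fin n)) 1)
    (hy : y ∈ ball (0 : EuclideanSpace ℝ (Fin n)) 1)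
    (w : EuclideanSpace ℝ (Fin n))
    (hw : w = (dist x y / 2) • EuclideanSpace.single (⟨0, hn⟩ : Fin n) (1 : ℝ)) :
    uMet (ball 0 1) (-w) w = 2 * Real.log ((2 + dist x y) / (2 - dist x y)) ∧
    2 * Real.log ((2 + dist x y) / (2 - dist x y)) ≤ uMet (ball 0 1) x y ∧
    (y = -x →
      uMet (ball 0 1) x y = 2 * Real.log ((2 + dist x y) / (2 - dist x y))) := by
  have hx1 : ‖x‖ < 1 := by simpa using hx
  have hy1 : ‖y‖ < 1 := by simpa using hy
  have htri : dist x y ≤ ‖x‖ + ‖y‖ := by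
    rw [dist_eq_norm]
    exact norm_sub_le x y
  have hr : 0 ≤ dist x y := dist_nonneg
  refine ⟨?_, ?_, ?_⟩
  · have hwn : ‖-w‖ = dist x y / 2 := by
      rw [norm_neg, hw, norm_smul, Real.norm_eq_abs, abs_of_nonneg (by linarith)]
      simp
    have h := uMet_unitBall_neg hn (x := -w) (by linarith)
    rwa [neg_neg, hwn, mul_div_cancel₀ _ (two_ne_zero' ℝ)] at h
  · rw [uMet, infDist_frontier_unitBall hn hx1, infDist_frontier_unitBall hn hy1]
    refine mul_le_mul_of_nonneg_left (Real.log_le_log ?_ ?_) zero_le_two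
    · exact div_pos (by linarith) (by linarith)
    · exact div_le_add_max_div_sqrt (by linarith) (by linarith) hr (by linarith)
  · rintro rfl
    have hd : dist x (-x) = 2 * ‖x‖ := by
      rw [dist_eq_norm, sub_neg_eq_add, ← two_smul ℝ x, norm_smul]
      simp
    rw [uMet_unitBall_neg hn hx1, hd]
end
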